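/- arXiv:2202.08186 — 2 statements merged into one kernel-verified Lean document; each statement's English description precedes it below -/
import Mathlib

section
/- Let G = (V,E) be a finite simple graph, let v ∈ V, and let b, f ≥ 0 be integers. Then the number of connected subsets B ⊆ V such that (1) v ∈ B, (2) |B| = b+1, and (3) |N(B)| = f is at most the binomial coefficient C(b+f, b). -/
variable {V : Type} [Fintype V] [DecidableEq V]

/-- The neighborhood `N(B)` of a set of vertices `B`. -/
def nbhdSet (G : SimpleGraph V) (B : Finset V) : Set V :=
  {v | v ∉ B ∧ ∃ u ∈ B, G.Adj u v}

/-- `Q_G(S,v)` (relative to a vertex subset `W`): the set of vertices `w ∈ W ∖ (S ∪ {v})`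
such that `v` and `w` are connected by a path in `G[S ∪ {v,w}]`. -/
def QOn (G : SimpleGraph V) (W S : Finset V) (v : V) : Set V :=
  {w | w ∈ W ∧ w ∉ S ∧ w ≠ v ∧
    (G.induce ((S : Set V) ∪ {v, w})).Reachable ⟨v, by simp⟩ ⟨w, by simp⟩}

/-- `π` is a permutation of `W`, i.e. a bijection from `W` onto `{0, …, |W| - 1}`. -/
def IsPermOn (W : Finset V) (π : V → ℕ) : Prop :=
  Set.BijOn π ↑W ↑(Finset.range W.card)

/-- `TW_{G[W]}(S) = min_{π ∈ Π(W)} max_{v ∈ S} |Q_{G[W]}(π_{<v}, v)|`. -/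
noncomputable def TWOn (G : SimpleGraph V) (W S : Finset V) : ℕ :=
  sInf { m | ∃ π : V → ℕ, IsPermOn W π ∧
    m = S.sup fun v => (QOn G W (W.filter fun w => π w < π v) v).ncard }

/-- `TW_G(S)`. -/
noncomputable def TW (G : SimpleGraph V) (S : Finset V) : ℕ :=
  TWOn G Finset.univ S

/-- `TWR_G(L,S)`: as `TW_G(S)` but minimizing only over permutations having `L` as a prefix. -/
noncomputable def TWR (G : SimpleGraph V) (L S : Finset V) : ℕ :=
  sInf { m | ∃ π : V → ℕ, IsPermOn Finset.univ π ∧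
    (∀ w, w ∈ L ↔ π w < L.card) ∧
    m = S.sup fun v =>
      (QOn G Finset.univ (L ∪ Finset.univ.filter fun w => π w < π v) v).ncard }

/-- A tree decomposition of the induced subgraph `G[W]`. -/
structure TreeDecomp (G : SimpleGraph V) (W : Finset V) where
  ι : Type
  [instFintype : Fintype ι]
  tree : SimpleGraph ι
  isTree : tree.IsTree
  bags : ι → Finset V
  bags_subset : ∀ i, bags i ⊆ W
  covers : ∀ v ∈ W, ∃ i, v ∈ bags i
  covers_edges : ∀ u v : V, u ∈ W → v ∈ W → G.Adj u v → ∃ i, u ∈ bags i ∧ v ∈ bags i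
  subtree : ∀ (v : V) (i j : ι) (hi : v ∈ bags i) (hj : v ∈ bags j),
    (tree.induce {k | v ∈ bags k}).Reachable ⟨i, hi⟩ ⟨j, hj⟩

/-- The width of a tree decomposition: (maximum bag size) − 1. -/
noncomputable def TreeDecomp.width {G : SimpleGraph V} {W : Finset V}
    (D : TreeDecomp G W) : ℤ :=
  letI := D.instFintype
  ((Finset.univ.sup fun i => (D.bags i).card : ℕ) : ℤ) - 1

/-- The treewidth of `G`. -/
noncomputable def tw (G : SimpleGraph V) : ℤ :=
  sInf { w : ℤ | ∃ D : TreeDecomp G Finset.univ, D.width = w }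

/-- `tw(G[W], χ)`: the minimum width of a tree decomposition of `G[W]` having `χ` as a bag. -/
noncomputable def twBagOn (G : SimpleGraph V) (W χ : Finset V) : ℤ :=
  sInf { w : ℤ | ∃ D : TreeDecomp G W, (∃ i, D.bags i = χ) ∧ D.width = w }

/-- `tw(G, χ)`. -/
noncomputable def twBag (G : SimpleGraph V) (χ : Finset V) : ℤ :=
  twBagOn G Finset.univ χ

/-- `P_π(v,w)`: there is a path from `v` to `w` in `G` all of whose internal vertices `u`
satisfy `π u < π v` and `π u < π w`. -/
def Ppred (G : SimpleGraph V) (π : V → ℕ) (v w : V) : Prop :=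
  ∃ p : G.Walk v w, ∀ u ∈ p.support, u ≠ v → u ≠ w → π u < π v ∧ π u < π w

/-- `R_π(v)`. -/
noncomputable def Rval (G : SimpleGraph V) (π : V → ℕ) (v : V) : ℕ :=
  {w | π v < π w ∧ Ppred G π v w}.ncard

/-- `C` is the vertex set of a connected component of `G[A]`. -/
def IsCompOf (G : SimpleGraph V) (A C : Finset V) : Prop :=
  C.Nonempty ∧ C ⊆ A ∧ (G.induce (C : Set V)).Connected ∧
    ∀ u ∈ C, ∀ v ∈ A, G.Adj u v → v ∈ C

/-- `Ω` is a potential maximal clique of `G`. -/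
def PotMaxClique (G : SimpleGraph V) (Ω : Finset V) : Prop :=
  (∀ C : Finset V, IsCompOf G (Finset.univ \ Ω) C → nbhdSet G C ≠ ↑Ω) ∧
  ∀ u ∈ Ω, ∀ v ∈ Ω, u ≠ v →
    G.Adj u v ∨ ∃ C : Finset V, IsCompOf G (Finset.univ \ Ω) C ∧
      u ∈ nbhdSet G C ∧ v ∈ nbhdSet G C

/-!
Build `B` from `{v}` by branching. Suppose `S ⊆ B` and `F ⊆ N(B)` have been decided, and let
`w ∈ N(S) ∖ F`: either `w ∈ B` and `w` joins `S`, or `w ∈ N(B)` and `w` joins `F`. With `b` vertices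
of `B` and `f` vertices of `N(B)` still missing, this is Pascal's recursion for `(b + f).choose b`.
The branching ends with at most one candidate, because a connected set that meets `A` and avoids
`N(A)` is contained in `A`.
-/

section Branching

variable {α : Type} {G : SimpleGraph α} {S F A B : Finset α} {k m : ℕ} {w : α}

theorem disjoint_nbhdSet (G : SimpleGraph α) (B : Finset α) :
    Disjoint (B : Set α) (nbhdSet G B) :=
  Set.disjoint_left.mpr fun _ hB hN => hN.1 hB

theorem mem_nbhdSet_of_subset (hSB : S ⊆ B) (hw : w ∈ nbhdSet G S) (hwB : w ∉ B) :
    w ∈ nbhdSet G B :=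
  let ⟨_, u, hu, huw⟩ := hw
  ⟨hwB, u, hSB hu, huw⟩

theorem subset_of_preconnected_of_disjoint_nbhdSet (hB : (G.induce (B : Set α)).Preconnected)
    (hAB : ¬Disjoint A B) (hN : Disjoint (B : Set α) (nbhdSet G A)) : B ⊆ A := by
  obtain ⟨a, haA, haB⟩ := Finset.not_disjoint_iff.mp hAB
  by_contra hBA
  obtain ⟨x, hxB, hxA⟩ := Finset.not_subset.mp hBA
  obtain ⟨p⟩ := hB ⟨a, haB⟩ ⟨x, hxB⟩
  obtain ⟨d, -, hdA, hdA'⟩ := p.exists_boundary_dart {y | (y : α) ∈ A} haA hxA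
  exact Set.disjoint_left.mp hN d.snd.2 ⟨hdA', d.fst, hdA, d.adj⟩

/-- The connected sets `B` of size `k` with `|N(B)| = m` that are still possible once the vertices
of `S` have been put into `B` and those of `F` into `N(B)`. The size of `N(B)` is an extended
natural number, so that an infinite neighborhood does not count as an empty one. -/
def connectedExtensions (G : SimpleGraph α) (S F : Finset α) (k m : ℕ) : Set (Finset α) :=
  {B | (G.induce (B : Set α)).Connected ∧ S ⊆ B ∧ (F : Set α) ⊆ nbhdSet G B ∧
    B.card = k ∧ (nbhdSet G B).encard = m}

theorem connectedExtensions_subset_union [DecidableEq α] (hw : w ∈ nbhdSet G S) :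
    connectedExtensions G S F k m ⊆
      connectedExtensions G (insert w S) F k m ∪ connectedExtensions G S (insert w F) k m := by
  rintro B ⟨hconn, hS, hF, hk, hm⟩
  by_cases hwB : w ∈ B
  · exact .inl ⟨hconn, Finset.insert_subset hwB hS, hF, hk, hm⟩
  · refine .inr ⟨hconn, hS, ?_, hk, hm⟩
    rw [Finset.coe_insert]
    exact Set.insert_subset (mem_nbhdSet_of_subset hS hw hwB) hF

theorem connectedExtensions_subsingleton_of_nbhdSet_subset (hS : S.Nonempty)
    (hSF : nbhdSet G S ⊆ F) : (connectedExtensions G S F k m).Subsingleton := by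
  refine Set.subsingleton_of_subset_singleton (a := S) ?_
  rintro B ⟨hconn, hSB, hF, -, -⟩
  have hdisj : Disjoint (B : Set α) (nbhdSet G S) :=
    (disjoint_nbhdSet G B).mono_right (hSF.trans hF)
  have hmeet : ¬Disjoint S B := fun h => hS.ne_empty (h.eq_bot_of_le hSB)
  exact (subset_of_preconnected_of_disjoint_nbhdSet hconn.preconnected hmeet hdisj).antisymm hSB

theorem connectedExtensions_subsingleton_of_card_left (hk : S.card = k) :
    (connectedExtensions G S F k m).Subsingleton := by
  refine Set.subsingleton_of_subset_singleton (a := S) ?_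
  rintro B ⟨-, hSB, -, hB, -⟩
  exact (Finset.eq_of_subset_of_card_le hSB (hB.trans hk.symm).le).symm

theorem connectedExtensions_subsingleton_of_card_right (hS : S.Nonempty) (hm : F.card = m) :
    (connectedExtensions G S F k m).Subsingleton := by
  have hN : ∀ B ∈ connectedExtensions G S F k m, nbhdSet G B = F := by
    rintro B ⟨-, -, hF, -, hB⟩
    refine (F.finite_toSet.eq_of_subset_of_encard_le hF ?_).symm
    rw [hB, Set.encard_coe_eq_coe_finsetCard, hm]
  have hle : ∀ B ∈ connectedExtensions G S F k m, ∀ A ∈ connectedExtensions G S F k m, B ⊆ A := by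
    intro B hB A hA
    have hdisj : Disjoint (B : Set α) (nbhdSet G A) := by
      rw [hN A hA, ← hN B hB]
      exact disjoint_nbhdSet G B
    obtain ⟨s, hs⟩ := hS
    have hmeet : ¬Disjoint A B := Finset.not_disjoint_iff.mpr ⟨s, hA.2.1 hs, hB.2.1 hs⟩
    exact subset_of_preconnected_of_disjoint_nbhdSet hB.1.preconnected hmeet hdisj
  exact fun B hB A hA => (hle B hB A hA).antisymm (hle A hA B hB)

theorem encard_connectedExtensions_le_choose (hS : S.Nonempty) (b f : ℕ) (hk : S.card + b = k)
    (hm : F.card + f = m) : (connectedExtensions G S F k m).encard ≤ (b + f).choose b := by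
  classical
  have of_subsingleton {b f : ℕ} {𝓑 : Set (Finset α)} (h : 𝓑.Subsingleton) :
      𝓑.encard ≤ (b + f).choose b :=
    (Set.encard_le_one_iff_subsingleton.mpr h).trans
      (mod_cast Nat.choose_pos (Nat.le_add_right b f))
  induction b generalizing S F f with
  | zero => exact of_subsingleton (connectedExtensions_subsingleton_of_card_left hk)
  | succ b ihb =>
  induction f generalizing S F with
  | zero => exact of_subsingleton (connectedExtensions_subsingleton_of_card_right hS hm)
  | succ f ihf =>
  by_cases hSF : nbhdSet G S ⊆ F
  · exact of_subsingleton (connectedExtensions_subsingleton_of_nbhdSet_subset hS hSF)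
  obtain ⟨w, hwS, hwF⟩ := Set.not_subset.mp hSF
  have hk' : (insert w S).card + b = k := by
    rw [Finset.card_insert_of_notMem hwS.1]; lia
  have hm' : (insert w F).card + f = m := by
    rw [Finset.card_insert_of_notMem hwF]; lia
  calc (connectedExtensions G S F k m).encard
      ≤ (connectedExtensions G (insert w S) F k m).encard
          + (connectedExtensions G S (insert w F) k m).encard :=
        (Set.encard_le_encard (connectedExtensions_subset_union hwS)).trans
          (Set.encard_union_le _ _)
    _ ≤ (b + (f + 1)).choose b + (b + 1 + f).choose (b + 1) :=
        add_le_add (ihb (Finset.insert_nonempty w S) (f + 1) hk' hm) (ihf hS hk hm')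
    _ = (b + 1 + (f + 1)).choose (b + 1) := by
        rw [Nat.add_right_comm b 1 f, Nat.add_right_comm b 1 (f + 1), Nat.choose_succ_succ]
        push_cast; rfl

end Branching

theorem stmt0_general {α : Type} (G : SimpleGraph α) (v : α) (b f : ℕ) :
    {B : Finset α | v ∈ B ∧ B.card = b + 1 ∧
        (G.induce (B : Set α)).Connected ∧ (nbhdSet G B).encard = f}.encard
      ≤ (b + f).choose b := by
  have hsub : {B : Finset α | v ∈ B ∧ B.card = b + 1 ∧
      (G.induce (B : Set α)).Connected ∧ (nbhdSet G B).encard = f} ⊆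
        connectedExtensions G {v} ∅ (b + 1) f :=
    fun B ⟨hv, hk, hconn, hm⟩ => ⟨hconn, Finset.singleton_subset_iff.mpr hv, by simp, hk, hm⟩
  have hk : ({v} : Finset α).card + b = b + 1 := by rw [Finset.card_singleton, add_comm]
  have hm : (∅ : Finset α).card + f = f := by rw [Finset.card_empty, zero_add]
  exact (Set.encard_le_encard hsub).trans
    (encard_connectedExtensions_le_choose (Finset.singleton_nonempty v) b f hk hm)

theorem stmt0 (G : SimpleGraph V) (v : V) (b f : ℕ) :
    {B : Finset V | v ∈ B ∧ B.card = b + 1 ∧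
        (G.induce (B : Set V)).Connected ∧ (nbhdSet G B).ncard = f}.ncard
      ≤ (b + f).choose b := by
  simpa only [← (Set.toFinite _).cast_ncard_eq, Nat.cast_inj, Nat.cast_le]
    using stmt0_general G v b f
end

section
/- Let G = (V,E) be a finite simple graph with V nonempty and let k be a non-negative integer. Then tw(G) ≤ k if and only if there exists a permutation π ∈ Π(V) such that R_π(v) ≤ k for every v ∈ V. -/
variable {V : Type} [Fintype V] [DecidableEq V]

/-!
A permutation `π` defines a fill-in graph, in which `v` and `w` are adjacent when `P_π(v, w)` holds.
The higher neighbours of a vertex are pairwise adjacent there, so sending each vertex to its lowest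
higher neighbour yields a rooted tree, and the sets consisting of a vertex and its higher
neighbours are the bags of a tree decomposition over it; their sizes are `R_π(v) + 1`.

Conversely, root the tree of a decomposition and let `π` list the vertices by decreasing depth of
the top node of their subtrees. A path witnessing `P_π(v, w)` with `π v < π w` cannot leave the
part of the tree below the top node `x` of `v` before reaching `w`, whereas the top node of `w` is
at most as deep as `x`; hence the subtree of `w` contains `x`, and `v` together with its higher
neighbours is contained in the bag at `x`.
-/

section Descendants

variable {ι : Type*} {T : SimpleGraph ι} {r x y z : ι}

/-- The nodes below `x` when `T` is rooted at `r`, `x` included. Quantifying over all walks to the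
root makes sense in every graph; in a tree this says that `x` lies on the path from `r` to `y`. -/
def descendants (T : SimpleGraph ι) (r x : ι) : Set ι :=
  {y | ∀ p : T.Walk y r, x ∈ p.support}

theorem self_mem_descendants : x ∈ descendants T r x :=
  fun p => p.start_mem_support

theorem eq_of_adj_of_notMem_descendants (hy : y ∈ descendants T r x) (hyz : T.Adj y z)
    (hz : z ∉ descendants T r x) : y = x := by
  obtain ⟨p, hp⟩ := not_forall.mp hz
  have hx : x ∈ (SimpleGraph.Walk.cons hyz p).support := hy _
  rw [SimpleGraph.Walk.support_cons, List.mem_cons] at hx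
  exact (hx.resolve_right hp).symm

theorem dist_lt_of_adj_of_notMem_descendants (hT : T.IsAcyclic) (hxz : T.Adj x z)
    (hz : z ∉ descendants T r x) : T.dist z r < T.dist x r := by
  classical
  obtain ⟨p, hp⟩ := not_forall.mp hz
  have hpath : (SimpleGraph.Walk.cons hxz p.bypass).IsPath :=
    p.bypass_isPath.cons fun hx => hp (p.support_bypass_subset_support hx)
  obtain ⟨q, hq, hqlen⟩ :=
    (SimpleGraph.Walk.cons hxz p.bypass).reachable.exists_path_of_dist
  have hqp : q = SimpleGraph.Walk.cons hxz p.bypass :=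
    congrArg Subtype.val ((hT.subsingleton_path x r).elim ⟨q, hq⟩ ⟨_, hpath⟩)
  calc T.dist z r ≤ p.bypass.length := T.dist_le _
    _ < q.length := by simp [hqp]
    _ = T.dist x r := hqlen

theorem eq_of_mem_descendants_of_dist_le (hT : T.Connected) (hy : y ∈ descendants T r x)
    (hle : T.dist y r ≤ T.dist x r) : y = x := by
  classical
  obtain ⟨p, hp⟩ := hT.exists_walk_length_eq_dist y r
  have hlen := congrArg SimpleGraph.Walk.length (p.take_spec (hy p))
  rw [SimpleGraph.Walk.length_append] at hlen
  have hdrop := T.dist_le (p.dropUntil x (hy p))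
  exact SimpleGraph.Walk.eq_of_length_eq_zero (p := p.takeUntil x (hy p)) (by omega)

theorem mem_and_exists_dist_lt_of_exit_descendants (hT : T.IsAcyclic) {S : Set ι}
    (hS : (T.induce S).Preconnected) (hyS : y ∈ S) (hy : y ∈ descendants T r x)
    (hzS : z ∈ S) (hz : z ∉ descendants T r x) :
    x ∈ S ∧ ∃ j ∈ S, T.dist j r < T.dist x r := by
  obtain ⟨p⟩ := hS ⟨y, hyS⟩ ⟨z, hzS⟩
  obtain ⟨⟨⟨⟨i, hiS⟩, ⟨j, hjS⟩⟩, hij⟩, -, hi, hj⟩ :=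
    p.exists_boundary_dart (Subtype.val ⁻¹' descendants T r x) hy hz
  obtain rfl : i = x := eq_of_adj_of_notMem_descendants hi hij hj
  exact ⟨hiS, j, hjS, dist_lt_of_adj_of_notMem_descendants hT hij hj⟩

end Descendants

section ParentGraph

variable {ι : Type*} {p : ι → ι} {r : ι}

/-- The graph joining each node to its parent `p i`. A root is encoded as a fixed point of `p`. -/
def parentGraph (p : ι → ι) : SimpleGraph ι :=
  SimpleGraph.fromRel fun i j => p i = j

theorem edgeSet_parentGraph_subset (hr : p r = r) :
    (parentGraph p).edgeSet ⊆ (fun i => s(i, p i)) '' {r}ᶜ := by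
  intro e
  induction e using Sym2.ind with
  | _ i j =>
    rintro ⟨hij : i ≠ j, (hpi : p i = j) | (hpj : p j = i)⟩
    · exact ⟨i, fun hir : i = r => hij (by rw [← hpi, hir, hr]), congrArg (s(i, ·)) hpi⟩
    · exact ⟨j, fun hjr : j = r => hij (by rw [← hpj, hjr, hr]), hpj ▸ Sym2.eq_swap⟩

variable {α : Type*} [Finite ι] [Preorder α] {f : ι → α}

theorem preconnected_induce_parentGraph {S : Set ι} (hr : r ∈ S)
    (hS : ∀ i ∈ S, i ≠ r → p i ∈ S ∧ f i < f (p i)) :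
    ((parentGraph p).induce S).Preconnected := by
  have hwf : WellFounded fun i j : ι => f j < f i :=
    haveI : IsTrans ι fun i j => f j < f i := ⟨fun _ _ _ hij hjk => hjk.trans hij⟩
    haveI : Std.Irrefl fun i j : ι => f j < f i := ⟨fun i => lt_irrefl (f i)⟩
    Finite.wellFounded_of_trans_of_irrefl _
  have reachable_root (i : ι) : ∀ hi : i ∈ S,
      ((parentGraph p).induce S).Reachable ⟨i, hi⟩ ⟨r, hr⟩ := by
    induction i using hwf.induction with
    | _ i ih =>
      intro hi
      obtain rfl | hir := eq_or_ne i r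
      · rfl
      obtain ⟨hpi, hlt⟩ := hS i hi hir
      have hadj : ((parentGraph p).induce S).Adj ⟨i, hi⟩ ⟨p i, hpi⟩ :=
        ⟨fun h => hlt.ne (congrArg f h), Or.inl rfl⟩
      exact hadj.reachable.trans (ih (p i) hlt hpi)
  exact fun i j => (reachable_root i i.2).trans (reachable_root j j.2).symm

theorem connected_parentGraph (hp : ∀ i ≠ r, f i < f (p i)) : (parentGraph p).Connected := by
  have : Nonempty ι := ⟨r⟩
  refine ⟨(SimpleGraph.induceUnivIso (parentGraph p)).preconnected_iff.mp ?_⟩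
  exact preconnected_induce_parentGraph (Set.mem_univ r) fun i _ hir => ⟨Set.mem_univ _, hp i hir⟩

theorem isTree_parentGraph (hr : p r = r) (hp : ∀ i ≠ r, f i < f (p i)) :
    (parentGraph p).IsTree := by
  have hconn := connected_parentGraph hp
  refine SimpleGraph.isTree_iff_connected_and_card.mpr
    ⟨hconn, le_antisymm ?_ hconn.card_vert_le_card_edgeSet_add_one⟩
  calc Nat.card (parentGraph p).edgeSet + 1
      ≤ ((fun i => s(i, p i)) '' {r}ᶜ).ncard + 1 :=
        Nat.add_le_add_right (Set.ncard_le_ncard (edgeSet_parentGraph_subset hr)) 1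
    _ ≤ ({r}ᶜ : Set ι).ncard + 1 := Nat.add_le_add_right Set.ncard_image_le 1
    _ = Nat.card ι := by rw [add_comm, ← Set.ncard_singleton r, Set.ncard_add_ncard_compl]

end ParentGraph

section FillIn

variable {V : Type} {G : SimpleGraph V} {π : V → ℕ} {u v w : V}

theorem Ppred.of_adj (h : G.Adj v w) : Ppred G π v w :=
  ⟨h.toWalk, fun u hu huv huw => by simp_all⟩

theorem Ppred.of_common_lower (huv : π u < π v) (huw : π u < π w)
    (hv : Ppred G π u v) (hw : Ppred G π u w) : Ppred G π v w := by
  obtain ⟨p, hp⟩ := hv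
  obtain ⟨q, hq⟩ := hw
  refine ⟨p.reverse.append q, fun x hx hxv hxw => ?_⟩
  obtain rfl | hxu := eq_or_ne x u
  · exact ⟨huv, huw⟩
  rw [SimpleGraph.Walk.mem_support_append_iff, SimpleGraph.Walk.support_reverse,
    List.mem_reverse] at hx
  obtain hx | hx := hx
  · exact ⟨(hp x hx hxu hxv).2, (hp x hx hxu hxv).1.trans huw⟩
  · exact ⟨(hq x hx hxu hxw).1.trans huv, (hq x hx hxu hxw).2⟩

variable [Fintype V]

open Classical in
/-- The higher neighbours of `v` in the fill-in graph of `π`; their number is `R_π(v)`. -/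
noncomputable def higherNbrs (G : SimpleGraph V) (π : V → ℕ) (v : V) : Finset V :=
  {w | π v < π w ∧ Ppred G π v w}

theorem mem_higherNbrs : w ∈ higherNbrs G π v ↔ π v < π w ∧ Ppred G π v w := by
  simp [higherNbrs]

theorem self_notMem_higherNbrs : v ∉ higherNbrs G π v :=
  fun h => lt_irrefl _ (mem_higherNbrs.mp h).1

/-- The clique of the fill-in graph created by eliminating `v`: the vertex `v` together with its
higher neighbours. -/
noncomputable def elimBag (G : SimpleGraph V) (π : V → ℕ) (v : V) : Finset V :=
  (higherNbrs G π v).cons v self_notMem_higherNbrs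

theorem self_mem_elimBag : v ∈ elimBag G π v :=
  Finset.mem_cons_self _ _

theorem mem_elimBag_of_mem_higherNbrs (h : w ∈ higherNbrs G π v) : w ∈ elimBag G π v :=
  Finset.mem_cons_of_mem h

theorem card_elimBag : (elimBag G π v).card = Rval G π v + 1 := by
  rw [elimBag, Finset.card_cons, Rval, ← Set.ncard_coe_finset]
  simp [higherNbrs]

theorem mem_higherNbrs_of_mem_of_lt (hv : v ∈ higherNbrs G π u) (hw : w ∈ higherNbrs G π u)
    (hvw : π v < π w) : w ∈ higherNbrs G π v := by
  rw [mem_higherNbrs] at hv hw ⊢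
  exact ⟨hvw, .of_common_lower hv.1 hw.1 hv.2 hw.2⟩

theorem exists_higherNbrs_subset_elimBag (hπ : Function.Injective π)
    (hv : (higherNbrs G π v).Nonempty) :
    ∃ m, π v < π m ∧ higherNbrs G π v ⊆ elimBag G π m := by
  obtain ⟨m, hm, hmin⟩ := (higherNbrs G π v).exists_min_image π hv
  refine ⟨m, (mem_higherNbrs.mp hm).1, fun w hw => ?_⟩
  obtain rfl | hne := eq_or_ne m w
  · exact self_mem_elimBag
  · exact mem_elimBag_of_mem_higherNbrs
      (mem_higherNbrs_of_mem_of_lt hm hw ((hmin w hw).lt_of_ne (hπ.ne hne)))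

theorem exists_elimParent (G : SimpleGraph V) (hπ : Function.Injective π) {r : V}
    (hr : ∀ v, π v ≤ π r) :
    ∃ p : V → V, p r = r ∧ (∀ v ≠ r, π v < π (p v)) ∧
      ∀ v, higherNbrs G π v ⊆ elimBag G π (p v) := by
  have exists_parent (v : V) :
      ∃ m, (v = r → m = r) ∧ (v ≠ r → π v < π m) ∧ higherNbrs G π v ⊆ elimBag G π m := by
    obtain hempty | hne := (higherNbrs G π v).eq_empty_or_nonempty
    · exact ⟨r, fun _ => rfl, fun hvr => (hr v).lt_of_ne (hπ.ne hvr), by simp [hempty]⟩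
    · obtain ⟨m, hlt, hsub⟩ := exists_higherNbrs_subset_elimBag hπ hne
      exact ⟨m, fun hvr => absurd (hvr ▸ hlt) (hr m).not_gt, fun _ => hlt, hsub⟩
  choose p hroot hlt hsub using exists_parent
  exact ⟨p, hroot r rfl, hlt, hsub⟩

theorem exists_mem_elimBag_of_adj (hπ : Function.Injective π) (h : G.Adj u v) :
    ∃ i, u ∈ elimBag G π i ∧ v ∈ elimBag G π i := by
  obtain huv | hvu := (hπ.ne h.ne).lt_or_gt
  · exact ⟨u, self_mem_elimBag, mem_elimBag_of_mem_higherNbrs (mem_higherNbrs.mpr ⟨huv, .of_adj h⟩)⟩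
  · exact ⟨v, mem_elimBag_of_mem_higherNbrs (mem_higherNbrs.mpr ⟨hvu, .of_adj h.symm⟩),
      self_mem_elimBag⟩

theorem preconnected_induce_mem_elimBag {p : V → V} {r : V} (hr : ∀ v, π v ≤ π r)
    (hp : ∀ v ≠ r, π v < π (p v)) (hsub : ∀ v, higherNbrs G π v ⊆ elimBag G π (p v)) (v : V) :
    ((parentGraph p).induce {i | v ∈ elimBag G π i}).Preconnected := by
  refine preconnected_induce_parentGraph (f := π) (r := v) self_mem_elimBag fun i hi hiv => ?_
  have hv : v ∈ higherNbrs G π i := (Finset.mem_cons.mp hi).resolve_left hiv.symm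
  have hir : i ≠ r := by
    rintro rfl
    exact (hr v).not_gt (mem_higherNbrs.mp hv).1
  exact ⟨hsub i hv, hp i hir⟩

theorem exists_treeDecomp_bags_eq_elimBag [Nonempty V] (G : SimpleGraph V)
    (hπ : Function.Injective π) :
    ∃ D : TreeDecomp G Finset.univ, ∀ i, ∃ v, D.bags i = elimBag G π v := by
  obtain ⟨r, hr⟩ := Finite.exists_max π
  obtain ⟨p, hpr, hp, hsub⟩ := exists_elimParent G hπ hr
  let D : TreeDecomp G Finset.univ :=
    { ι := V
      tree := parentGraph p
      isTree := isTree_parentGraph hpr hp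
      bags := elimBag G π
      bags_subset := fun _ => Finset.subset_univ _
      covers := fun v _ => ⟨v, self_mem_elimBag⟩
      covers_edges := fun _ _ _ _ h => exists_mem_elimBag_of_adj hπ h
      subtree := fun v i j hi hj =>
        preconnected_induce_mem_elimBag hr hp hsub v ⟨i, hi⟩ ⟨j, hj⟩ }
  exact ⟨D, fun i => ⟨i, rfl⟩⟩

end FillIn

namespace TreeDecomp

variable {V : Type} {G : SimpleGraph V} {W : Finset V}

theorem width_le_iff (D : TreeDecomp G W) (k : ℕ) :
    D.width ≤ k ↔ ∀ i, (D.bags i).card ≤ k + 1 := by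
  let := D.instFintype
  have hsup : D.width ≤ k ↔ (Finset.univ.sup fun i => (D.bags i).card) ≤ k + 1 := by
    rw [width]
    omega
  simp [hsup]

theorem neg_one_le_width (D : TreeDecomp G W) : -1 ≤ D.width := by
  rw [width]
  omega

/-- The tree decomposition with a single bag. -/
def singleBag (G : SimpleGraph V) (W : Finset V) : TreeDecomp G W where
  ι := Unit
  tree := ⊥
  isTree := .of_subsingleton
  bags _ := W
  bags_subset _ := subset_rfl
  covers _ hv := ⟨(), hv⟩
  covers_edges _ _ hu hv _ := ⟨(), hu, hv⟩
  subtree _ _ _ _ _ := .rfl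

theorem preconnected_induce_mem_bags (D : TreeDecomp G W) (v : V) :
    (D.tree.induce {i | v ∈ D.bags i}).Preconnected :=
  fun i j => D.subtree v i j i.2 j.2

/-- The node `t` is closest to the root `r` among the nodes whose bag contains `v`. -/
def IsTop (D : TreeDecomp G W) (r : D.ι) (v : V) (t : D.ι) : Prop :=
  v ∈ D.bags t ∧ ∀ i, v ∈ D.bags i → D.tree.dist t r ≤ D.tree.dist i r

theorem exists_isTop (D : TreeDecomp G W) (r : D.ι) {v : V} (hv : v ∈ W) :
    ∃ t, D.IsTop r v t := by
  obtain ⟨t, ht, hmin⟩ :=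
    exists_minimalFor_of_wellFoundedLT (v ∈ D.bags ·) (D.tree.dist · r) (D.covers v hv)
  exact ⟨t, ht, fun i hi => (le_total _ _).elim id (hmin hi)⟩

variable {D : TreeDecomp G W} {r t x : D.ι} {v : V}

theorem IsTop.mem_descendants (ht : D.IsTop r v t) (hle : D.tree.dist x r ≤ D.tree.dist t r)
    {i : D.ι} (hi : v ∈ D.bags i) (hix : i ∈ descendants D.tree r x) {j : D.ι}
    (hj : v ∈ D.bags j) : j ∈ descendants D.tree r x := by
  by_contra hjx
  obtain ⟨-, l, hl, hlt⟩ := mem_and_exists_dist_lt_of_exit_descendants D.isTree.isAcyclic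
    (D.preconnected_induce_mem_bags v) hi hix hj hjx
  exact (hlt.trans_le hle).not_ge (ht.2 l hl)

theorem IsTop.mem_bag (ht : D.IsTop r v t) (hle : D.tree.dist t r ≤ D.tree.dist x r)
    {i : D.ι} (hi : v ∈ D.bags i) (hix : i ∈ descendants D.tree r x) : v ∈ D.bags x := by
  by_cases htx : t ∈ descendants D.tree r x
  · exact eq_of_mem_descendants_of_dist_le D.isTree.connected htx hle ▸ ht.1
  · exact (mem_and_exists_dist_lt_of_exit_descendants D.isTree.isAcyclic
      (D.preconnected_induce_mem_bags v) hi hix ht.1 htx).1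

end TreeDecomp

section EliminationOrder

variable {V : Type} [Fintype V] {G : SimpleGraph V} {D : TreeDecomp G Finset.univ} {r : D.ι}
  {top : V → D.ι} {π : V → ℕ} {v w : V}

theorem exists_mem_bags_descendants_of_ppred (htop : ∀ v, D.IsTop r v (top v))
    (hπ : ∀ u v, π u < π v → D.tree.dist (top v) r ≤ D.tree.dist (top u) r)
    (hvw : Ppred G π v w) : ∃ i, w ∈ D.bags i ∧ i ∈ descendants D.tree r (top v) := by
  obtain ⟨p, hp⟩ := hvw
  by_contra hw
  obtain ⟨⟨⟨y, z⟩, hyz⟩, hmem, ⟨i, hyi, hix⟩, hz⟩ := p.exists_boundary_dart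
    {u | ∃ i, u ∈ D.bags i ∧ i ∈ descendants D.tree r (top v)}
    ⟨top v, (htop v).1, self_mem_descendants⟩ hw
  have hyw : y ≠ w := by
    rintro rfl
    exact hw ⟨i, hyi, hix⟩
  have hle : D.tree.dist (top v) r ≤ D.tree.dist (top y) r := by
    obtain rfl | hyv := eq_or_ne y v
    · rfl
    · exact hπ y v (hp y (p.dart_fst_mem_support_of_mem_darts hmem) hyv hyw).1
  obtain ⟨j, hyj, hzj⟩ := D.covers_edges y z (Finset.mem_univ y) (Finset.mem_univ z) hyz
  exact hz ⟨j, hzj, (htop y).mem_descendants hle hyi hix hyj⟩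

theorem elimBag_subset_bags_top (htop : ∀ v, D.IsTop r v (top v))
    (hπ : ∀ u v, π u < π v → D.tree.dist (top v) r ≤ D.tree.dist (top u) r) (v : V) :
    elimBag G π v ⊆ D.bags (top v) := by
  refine Finset.cons_subset.mpr ⟨(htop v).1, fun w hw => ?_⟩
  obtain ⟨hlt, hvw⟩ := mem_higherNbrs.mp hw
  obtain ⟨i, hi, hix⟩ := exists_mem_bags_descendants_of_ppred htop hπ hvw
  exact (htop w).mem_bag (hπ v w hlt) hi hix

theorem isPermOn_univ_equivFin (e : V ≃ Fin (Fintype.card V)) :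
    IsPermOn Finset.univ fun v => (e v : ℕ) := by
  refine ⟨fun v _ => by simp, fun v _ w _ h => e.injective (Fin.ext h), fun i hi => ?_⟩
  have hi : i < Fintype.card V := by simpa using hi
  exact ⟨e.symm ⟨i, hi⟩, by simp, by simp⟩

theorem exists_isPermOn_univ_sorting {α : Type*} [LinearOrder α] (f : V → α) :
    ∃ π : V → ℕ, IsPermOn Finset.univ π ∧ ∀ v w, π v < π w → f v ≤ f w := by
  let e := Fintype.equivFin V
  let σ := Tuple.sort (f ∘ e.symm)
  refine ⟨_, isPermOn_univ_equivFin (e.trans σ.symm), fun v w h => ?_⟩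
  simpa [σ] using Tuple.monotone_sort (f ∘ e.symm) (Fin.lt_def.mpr h).le

theorem exists_isPermOn_elimBag_subset_bags (D : TreeDecomp G Finset.univ) :
    ∃ π : V → ℕ, IsPermOn Finset.univ π ∧ ∀ v, ∃ i, elimBag G π v ⊆ D.bags i := by
  obtain ⟨r⟩ := D.isTree.connected.nonempty
  choose top htop using fun v => D.exists_isTop r (Finset.mem_univ v)
  obtain ⟨π, hperm, hπ⟩ :=
    exists_isPermOn_univ_sorting fun v => OrderDual.toDual (D.tree.dist (top v) r)
  exact ⟨π, hperm, fun v => ⟨top v, elimBag_subset_bags_top htop hπ v⟩⟩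

end EliminationOrder

theorem tw_le_iff {V : Type} [Fintype V] {G : SimpleGraph V} {k : ℤ} :
    tw G ≤ k ↔ ∃ D : TreeDecomp G Finset.univ, D.width ≤ k := by
  have hbdd : BddBelow {w : ℤ | ∃ D : TreeDecomp G Finset.univ, D.width = w} :=
    ⟨-1, by rintro _ ⟨D, rfl⟩; exact D.neg_one_le_width⟩
  have hne : {w : ℤ | ∃ D : TreeDecomp G Finset.univ, D.width = w}.Nonempty :=
    ⟨_, TreeDecomp.singleBag G Finset.univ, rfl⟩
  constructor
  · intro h
    obtain ⟨D, hD⟩ := Int.csInf_mem hne hbdd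
    exact ⟨D, hD.trans_le h⟩
  · rintro ⟨D, hD⟩
    exact (csInf_le hbdd ⟨D, rfl⟩).trans hD

theorem stmt1 [Nonempty V] (G : SimpleGraph V) (k : ℕ) :
    tw G ≤ (k : ℤ) ↔
      ∃ π : V → ℕ, IsPermOn (Finset.univ : Finset V) π ∧ ∀ v : V, Rval G π v ≤ k := by
  have card_elimBag_le_iff (π : V → ℕ) (v : V) : (elimBag G π v).card ≤ k + 1 ↔ Rval G π v ≤ k := by
    rw [card_elimBag, Nat.add_le_add_iff_right]
  simp only [tw_le_iff, TreeDecomp.width_le_iff, ← card_elimBag_le_iff]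
  constructor
  · rintro ⟨D, hD⟩
    obtain ⟨π, hπ, hsub⟩ := exists_isPermOn_elimBag_subset_bags D
    refine ⟨π, hπ, fun v => ?_⟩
    obtain ⟨i, hi⟩ := hsub v
    exact (Finset.card_le_card hi).trans (hD i)
  · rintro ⟨π, hπ, hcard⟩
    have hinj : Function.Injective π :=
      Set.injOn_univ.mp (by simpa only [Finset.coe_univ] using hπ.injOn)
    obtain ⟨D, hD⟩ := exists_treeDecomp_bags_eq_elimBag G hinj
    refine ⟨D, fun i => ?_⟩
    obtain ⟨v, hv⟩ := hD i
    exact hv ▸ hcard v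
end
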